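/- The imaginary part of the hermitian form h takes the following values on the pairs of generators of the lattice Λ_A: Im h(𝐞₁,𝐞₂) = −4, Im h(𝐞₁,𝐞₃) = 0, Im h(𝐞₁,𝐞₄) = −2, Im h(𝐞₂,𝐞₃) = −6, Im h(𝐞₂,𝐞₄) = −4, Im h(𝐞₃,𝐞₄) = 6. In particular, Im h takes even integer values on all pairs of elements of Λ_A. -/

import Mathlib

/-!
Since `h` is hermitian, its imaginary part is an alternating `ℝ`-bilinear form, so its values on the
lattice are integer combinations of its values on pairs of distinct generators, and these are even.
The coordinates of the generators and the coefficients of `(√3 / 2) h` lie in the Eisenstein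
integers `ℤ[ζ]`. As `Im ζ = √3 / 2`, the imaginary part of `(2 / √3) (a + b ζ)` is the coefficient
`b`, which is read off on each pair of generators after reducing by `ζ² = ζ - 1` and `ζ̄ = 1 - ζ`.
-/

noncomputable section

/-- ζ = (1 + √3·i)/2, a primitive sixth root of unity. -/
def ζ : ℂ := (1 + (Real.sqrt 3 : ℂ) * Complex.I) / 2

def be1 : ℂ × ℂ := (1, 0)
def be2 : ℂ × ℂ := (ζ, 1)
def be3 : ℂ × ℂ := (0, 1 + ζ)
def be4 : ℂ × ℂ := (0, 2)

/-- The lattice Λ_A = ℤ𝐞₁ ⊕ ℤ𝐞₂ ⊕ ℤ𝐞₃ ⊕ ℤ𝐞₄ ⊂ ℂ². -/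
def ΛA : Set (ℂ × ℂ) :=
  {v | ∃ a b c d : ℤ, v = (a : ℂ) • be1 + (b : ℂ) • be2 + (c : ℂ) • be3 + (d : ℂ) • be4}

/-- The hermitian form h representing the class of the branch divisor D_A in NS(A). -/
def h (v w : ℂ × ℂ) : ℂ :=
  (2 / (Real.sqrt 3 : ℂ)) *
    (3 * v.1 * (starRingEnd ℂ) w.1 - (1 + ζ) * v.1 * (starRingEnd ℂ) w.2
      - (1 + (starRingEnd ℂ) ζ) * v.2 * (starRingEnd ℂ) w.1
      + 3 * v.2 * (starRingEnd ℂ) w.2)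

open ComplexConjugate

theorem apply_mem_of_isAlt_of_mem_span_range {R M N ι : Type*} [CommRing R]
    [AddCommGroup M] [AddCommGroup N] [Module R M] [Module R N] [LinearOrder ι]
    {B : M →ₗ[R] M →ₗ[R] N} (hB : B.IsAlt)
    (P : Submodule R N) {e : ι → M} (he : ∀ i j, i < j → B (e i) (e j) ∈ P) {x y : M}
    (hx : x ∈ Submodule.span R (Set.range e)) (hy : y ∈ Submodule.span R (Set.range e)) :
    B x y ∈ P := by
  refine LinearMap.BilinMap.apply_apply_mem_of_mem_span P _ _ B ?_ x y hx hy
  rintro _ ⟨i, rfl⟩ _ ⟨j, rfl⟩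
  rcases lt_trichotomy i j with hij | rfl | hji
  · exact he i j hij
  · rw [hB.self_eq_zero]
    exact P.zero_mem
  · rw [← hB.neg]
    exact P.neg_mem (he j i hji)

section SixthRoot

theorem ζ_im : ζ.im = √3 / 2 := by simp [ζ]

theorem conj_ζ : conj ζ = 1 - ζ := by
  simp only [ζ, map_div₀, map_add, map_mul, map_one, map_ofNat, Complex.conj_ofReal, Complex.conj_I]
  ring

theorem ζ_sq : ζ ^ 2 = ζ - 1 := by
  have sq_sqrt_three : (√3 : ℂ) ^ 2 = 3 := by
    exact_mod_cast Real.sq_sqrt (zero_le_three (α := ℝ))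
  rw [ζ]
  linear_combination (1 / 4 : ℂ) * Complex.I ^ 2 * sq_sqrt_three + (3 / 4 : ℂ) * Complex.I_sq

theorem im_two_div_sqrt_three_mul_of_eq_add_mul_ζ {a b : ℝ} {z : ℂ} (hz : z = a + b * ζ) :
    (2 / (√3 : ℂ) * z).im = b := by
  have scalar_eq : 2 / (√3 : ℂ) = ((2 / √3 : ℝ) : ℂ) := by push_cast; rfl
  rw [scalar_eq, Complex.im_ofReal_mul, hz, Complex.add_im, Complex.ofReal_im,
    Complex.im_ofReal_mul, ζ_im]
  field_simp
  ring

end SixthRoot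

section RiemannForm

theorem conj_h (v w : ℂ × ℂ) : conj (h v w) = h w v := by
  simp only [h, map_mul, map_add, map_sub, map_div₀, Complex.conj_conj, Complex.conj_ofReal,
    map_ofNat, map_one]
  ring

theorem h_add_left (v v' w : ℂ × ℂ) : h (v + v') w = h v w + h v' w := by
  simp only [h, Prod.fst_add, Prod.snd_add]
  ring

theorem h_smul_left (c : ℂ) (v w : ℂ × ℂ) : h (c • v) w = c * h v w := by
  simp only [h, Prod.smul_fst, Prod.smul_snd, smul_eq_mul]
  ring

theorem im_h_swap (v w : ℂ × ℂ) : (h w v).im = -(h v w).im := by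
  rw [← conj_h v w, Complex.conj_im]

theorem im_h_add_left (v v' w : ℂ × ℂ) : (h (v + v') w).im = (h v w).im + (h v' w).im := by
  rw [h_add_left, Complex.add_im]

theorem im_h_smul_left (r : ℝ) (v w : ℂ × ℂ) : (h (r • v) w).im = r • (h v w).im := by
  rw [← Complex.coe_smul, h_smul_left, Complex.im_ofReal_mul, smul_eq_mul]

/-- The Riemann form `Im h` of the hermitian form `h`, as a real bilinear form on `ℂ²`. -/
def riemannForm : LinearMap.BilinForm ℝ (ℂ × ℂ) :=
  LinearMap.mk₂ ℝ (fun v w ↦ (h v w).im) im_h_add_left im_h_smul_left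
    (fun v w w' ↦ by simp only [im_h_swap _ v, im_h_add_left, neg_add])
    (fun r v w ↦ by simp only [im_h_swap _ v, im_h_smul_left, smul_neg])

theorem riemannForm_apply (v w : ℂ × ℂ) : riemannForm v w = (h v w).im := rfl

theorem isAlt_riemannForm : riemannForm.IsAlt := fun v ↦
  self_eq_neg.mp (im_h_swap v v)

end RiemannForm

section Generators

theorem im_h_be1_be2 : (h be1 be2).im = -4 := by
  refine im_two_div_sqrt_three_mul_of_eq_add_mul_ζ (a := 2) (b := -4) ?_
  simp only [be1, be2, map_one, conj_ζ]
  push_cast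
  ring

theorem im_h_be1_be3 : (h be1 be3).im = 0 := by
  refine im_two_div_sqrt_three_mul_of_eq_add_mul_ζ (a := -3) (b := 0) ?_
  simp only [be1, be3, map_zero, map_add, map_one, conj_ζ]
  push_cast
  linear_combination ζ_sq

theorem im_h_be1_be4 : (h be1 be4).im = -2 := by
  refine im_two_div_sqrt_three_mul_of_eq_add_mul_ζ (a := -2) (b := -2) ?_
  simp only [be1, be4, map_zero, map_ofNat]
  push_cast
  ring

theorem im_h_be2_be3 : (h be2 be3).im = -6 := by
  refine im_two_div_sqrt_three_mul_of_eq_add_mul_ζ (a := 6) (b := -6) ?_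
  simp only [be2, be3, map_zero, map_add, map_one, conj_ζ]
  push_cast
  linear_combination ζ * ζ_sq

theorem im_h_be2_be4 : (h be2 be4).im = -4 := by
  refine im_two_div_sqrt_three_mul_of_eq_add_mul_ζ (a := 8) (b := -4) ?_
  simp only [be2, be4, map_zero, map_ofNat]
  push_cast
  linear_combination -2 * ζ_sq

theorem im_h_be3_be4 : (h be3 be4).im = 6 := by
  refine im_two_div_sqrt_three_mul_of_eq_add_mul_ζ (a := 6) (b := 6) ?_
  simp only [be3, be4, map_zero, map_ofNat]
  push_cast
  ring

/-- The generators `𝐞₁, 𝐞₂, 𝐞₃, 𝐞₄` of `Λ_A` as a family, indexed from `0`. -/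
def latticeGenerator : Fin 4 → ℂ × ℂ := ![be1, be2, be3, be4]

theorem mem_ΛA_iff_mem_span {v : ℂ × ℂ} :
    v ∈ ΛA ↔ v ∈ Submodule.span ℤ (Set.range latticeGenerator) := by
  simp only [Submodule.mem_span_range_iff_exists_fun, Fin.sum_univ_four, latticeGenerator]
  constructor
  · rintro ⟨a, b, c, d, rfl⟩
    exact ⟨![a, b, c, d], by simp [Int.cast_smul_eq_zsmul]⟩
  · rintro ⟨c, rfl⟩
    exact ⟨c 0, c 1, c 2, c 3, by simp [Int.cast_smul_eq_zsmul]⟩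

theorem riemannForm_latticeGenerator_mem_span_two (i j : Fin 4) (hij : i < j) :
    riemannForm (latticeGenerator i) (latticeGenerator j) ∈ Submodule.span ℤ {(2 : ℝ)} := by
  rw [Submodule.mem_span_singleton, riemannForm_apply]
  fin_cases i <;> fin_cases j
  all_goals try exact absurd hij (by decide)
  · exact ⟨-2, Eq.trans (by norm_num) im_h_be1_be2.symm⟩
  · exact ⟨0, Eq.trans (by norm_num) im_h_be1_be3.symm⟩
  · exact ⟨-1, Eq.trans (by norm_num) im_h_be1_be4.symm⟩
  · exact ⟨-3, Eq.trans (by norm_num) im_h_be2_be3.symm⟩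
  · exact ⟨-2, Eq.trans (by norm_num) im_h_be2_be4.symm⟩
  · exact ⟨3, Eq.trans (by norm_num) im_h_be3_be4.symm⟩

theorem riemannForm_mem_span_two {v w : ℂ × ℂ} (hv : v ∈ ΛA) (hw : w ∈ ΛA) :
    riemannForm v w ∈ Submodule.span ℤ {(2 : ℝ)} :=
  apply_mem_of_isAlt_of_mem_span_range (B := riemannForm.restrictScalars₁₂ ℤ ℤ) isAlt_riemannForm _
    riemannForm_latticeGenerator_mem_span_two (mem_ΛA_iff_mem_span.mp hv)
    (mem_ΛA_iff_mem_span.mp hw)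

end Generators

/-- Values of Im h on pairs of generators of Λ_A; in particular Im h takes even
integer values on all pairs of elements of Λ_A. -/
theorem stmt17 :
    (h be1 be2).im = -4 ∧ (h be1 be3).im = 0 ∧ (h be1 be4).im = -2 ∧
    (h be2 be3).im = -6 ∧ (h be2 be4).im = -4 ∧ (h be3 be4).im = 6 ∧
    (∀ v ∈ ΛA, ∀ w ∈ ΛA, ∃ n : ℤ, (h v w).im = ((2 * n : ℤ) : ℝ)) := by
  refine ⟨im_h_be1_be2, im_h_be1_be3, im_h_be1_be4, im_h_be2_be3, im_h_be2_be4, im_h_be3_be4, ?_⟩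
  intro v hv w hw
  obtain ⟨n, hn⟩ := Submodule.mem_span_singleton.mp (riemannForm_mem_span_two hv hw)
  refine ⟨n, ?_⟩
  rw [← riemannForm_apply, ← hn, zsmul_eq_mul, mul_comm 2 n]
  norm_cast
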